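/- arXiv:1710.08837 — 2 statements merged into one kernel-verified Lean document; each statement's English description precedes it below -/
import Mathlib

section
/- Let T1 and T2 be distinct torsion classes in tors Λ, and for i ∈ {1,2} let M_i be a minimal extending module for T_i. If Filt(T1 ∪ {M1}) = Filt(T2 ∪ {M2}), then Hom_Λ(M1, M2) = 0 and Hom_Λ(M2, M1) = 0. -/
/-!
Common definitions: the category `mod Λ` of finite(-dimensional) left `Λ`-modules,
torsion(-free) classes, filtration closures, bricks, minimal (co-)extending modules,
and the lattice-theoretic notions for `tors Λ` (ordered by containment).
-/

/-- A bundled (left) `Λ`-module with carrier in `Type`. -/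
structure Mdl (Λ : Type) [Ring Λ] : Type 1 where
  carrier : Type
  [isAddCommGroup : AddCommGroup carrier]
  [isModule : Module Λ carrier]

attribute [instance] Mdl.isAddCommGroup Mdl.isModule

instance {Λ : Type} [Ring Λ] : CoeSort (Mdl Λ) Type :=
  ⟨Mdl.carrier⟩

variable (Λ : Type) [Ring Λ]

/-- Bundle a module. -/
def Mdl.of (X : Type) [AddCommGroup X] [Module Λ X] : Mdl Λ :=
  { carrier := X }

/-- `M` and `N` are isomorphic `Λ`-modules. -/
def MIso (M N : Mdl Λ) : Prop :=
  Nonempty (M.carrier ≃ₗ[Λ] N.carrier)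

/-- `N` is a factor (quotient) module of `M`. -/
def IsFactor (M N : Mdl Λ) : Prop :=
  ∃ f : M.carrier →ₗ[Λ] N.carrier, Function.Surjective f

/-- `N` is a proper factor of `M` (a quotient by a nonzero submodule). -/
def IsProperFactor (M N : Mdl Λ) : Prop :=
  ∃ f : M.carrier →ₗ[Λ] N.carrier, Function.Surjective f ∧ ¬ Function.Injective f

/-- `N` is (isomorphic to) a submodule of `M`. -/
def IsSubmoduleOf (N M : Mdl Λ) : Prop :=
  ∃ f : N.carrier →ₗ[Λ] M.carrier, Function.Injective f

/-- `N` is (isomorphic to) a proper submodule of `M`. -/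
def IsProperSubmoduleOf (N M : Mdl Λ) : Prop :=
  ∃ f : N.carrier →ₗ[Λ] M.carrier, Function.Injective f ∧ ¬ Function.Surjective f

/-- `D` is (isomorphic to) a direct summand of `N`. -/
def IsSummand (D N : Mdl Λ) : Prop :=
  ∃ (i : D.carrier →ₗ[Λ] N.carrier) (p : N.carrier →ₗ[Λ] D.carrier),
    p.comp i = LinearMap.id

/-- `0 → A --f--> M --g--> B → 0` is a short exact sequence. -/
def IsSES {A M B : Mdl Λ} (f : A.carrier →ₗ[Λ] M.carrier)
    (g : M.carrier →ₗ[Λ] B.carrier) : Prop :=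
  Function.Injective f ∧ Function.Surjective g ∧ LinearMap.range f = LinearMap.ker g

/-- The short exact sequence `0 → A --f--> M --g--> B → 0` splits. -/
def SplitsSES {A M B : Mdl Λ} (_f : A.carrier →ₗ[Λ] M.carrier)
    (g : M.carrier →ₗ[Λ] B.carrier) : Prop :=
  ∃ s : B.carrier →ₗ[Λ] M.carrier, g.comp s = LinearMap.id

/-- `M` is an extension of `B` by `A`, i.e. there is a s.e.s. `0 → A → M → B → 0`. -/
def ExtOf (M A B : Mdl Λ) : Prop :=
  ∃ (f : A.carrier →ₗ[Λ] M.carrier) (g : M.carrier →ₗ[Λ] B.carrier), IsSES Λ f g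

/-- A torsion class in `mod Λ`: a class of finite(-dimensional) modules containing `0`
and closed under isomorphisms, factor modules and extensions. -/
structure IsTorsionClass (T : Set (Mdl Λ)) : Prop where
  fin : ∀ M ∈ T, Module.Finite Λ M.carrier
  zero_mem : ∀ M : Mdl Λ, Subsingleton M.carrier → M ∈ T
  iso_closed : ∀ M ∈ T, ∀ N : Mdl Λ, MIso Λ M N → N ∈ T
  factor_closed : ∀ M ∈ T, ∀ N : Mdl Λ, IsFactor Λ M N → N ∈ T
  ext_closed : ∀ A ∈ T, ∀ B ∈ T, ∀ M : Mdl Λ, ExtOf Λ M A B → M ∈ T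

/-- A torsion-free class in `mod Λ`: a class of finite(-dimensional) modules containing `0`
and closed under isomorphisms, submodules and extensions. -/
structure IsTorsionFreeClass (F : Set (Mdl Λ)) : Prop where
  fin : ∀ M ∈ F, Module.Finite Λ M.carrier
  zero_mem : ∀ M : Mdl Λ, Subsingleton M.carrier → M ∈ F
  iso_closed : ∀ M ∈ F, ∀ N : Mdl Λ, MIso Λ M N → N ∈ F
  sub_closed : ∀ M ∈ F, ∀ N : Mdl Λ, IsSubmoduleOf Λ N M → N ∈ F
  ext_closed : ∀ A ∈ F, ∀ B ∈ F, ∀ M : Mdl Λ, ExtOf Λ M A B → M ∈ F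

/-- `Filt S M`: `M` admits a filtration `0 = M₀ ⊆ M₁ ⊆ ⋯ ⊆ M_l = M` whose successive
quotients are isomorphic to modules in `S`. -/
inductive Filt (S : Set (Mdl Λ)) : Mdl Λ → Prop
  | of_subsingleton (M : Mdl Λ) (h : Subsingleton M.carrier) : Filt S M
  | step (M : Mdl Λ) (N : Submodule Λ M.carrier) (X : Mdl Λ) (hX : X ∈ S)
      (hN : Filt S (Mdl.of Λ N)) (e : Nonempty ((M.carrier ⧸ N) ≃ₗ[Λ] X.carrier)) :
      Filt S M

/-- The filtration closure `Filt(S)` as a set of modules. -/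
def FiltSet (S : Set (Mdl Λ)) : Set (Mdl Λ) := {M | Filt Λ S M}

/-- `Gen(M)`: the class of factor modules of finite direct sums of copies of `M`. -/
def GenSet (M : Mdl Λ) : Set (Mdl Λ) :=
  {N | ∃ (n : ℕ) (f : (Fin n → M.carrier) →ₗ[Λ] N.carrier), Function.Surjective f}

/-- `T^⊥ = {X ∈ mod Λ : Hom_Λ(N, X) = 0 for all N ∈ T}`. -/
def Perp (T : Set (Mdl Λ)) : Set (Mdl Λ) :=
  {X | Module.Finite Λ X.carrier ∧ ∀ N ∈ T, ∀ f : N.carrier →ₗ[Λ] X.carrier, f = 0}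

/-- A brick: a module (in `mod Λ`) whose endomorphism ring is a division ring,
i.e. it is nonzero and every nonzero endomorphism is invertible. -/
def IsBrick (M : Mdl Λ) : Prop :=
  Module.Finite Λ M.carrier ∧ Nontrivial M.carrier ∧
    ∀ f : M.carrier →ₗ[Λ] M.carrier, f ≠ 0 → Function.Bijective f

/-- An indecomposable module: nonzero, and not the direct sum of two nonzero submodules. -/
def Indec (M : Mdl Λ) : Prop :=
  Nontrivial M.carrier ∧
    ∀ p q : Submodule Λ M.carrier, IsCompl p q → p = ⊥ ∨ q = ⊥

/-- `M` is a minimal extending module for the torsion class `T`: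
(P1) every proper factor of `M` is in `T`;
(P2) if `0 → M → X → N → 0` is non-split exact with `N ∈ T`, then `X ∈ T`;
(P3) `Hom_Λ(T, M) = 0`. -/
structure IsMinExt (T : Set (Mdl Λ)) (M : Mdl Λ) : Prop where
  fin : Module.Finite Λ M.carrier
  p1 : ∀ N : Mdl Λ, IsProperFactor Λ M N → N ∈ T
  p2 : ∀ (X N : Mdl Λ) (f : M.carrier →ₗ[Λ] X.carrier) (g : X.carrier →ₗ[Λ] N.carrier),
      IsSES Λ f g → ¬ SplitsSES Λ f g → N ∈ T → X ∈ T
  p3 : ∀ N ∈ T, ∀ f : N.carrier →ₗ[Λ] M.carrier, f = 0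

/-- `M` is a minimal co-extending module for the torsion-free class `F`:
(P1') every proper submodule of `M` is in `F`;
(P2') if `0 → F' → X → M → 0` is non-split exact with `F' ∈ F`, then `X ∈ F`;
(P3') `Hom_Λ(M, F) = 0`. -/
structure IsMinCoExt (F : Set (Mdl Λ)) (M : Mdl Λ) : Prop where
  fin : Module.Finite Λ M.carrier
  p1 : ∀ N : Mdl Λ, IsProperSubmoduleOf Λ N M → N ∈ F
  p2 : ∀ (X F' : Mdl Λ) (f : F'.carrier →ₗ[Λ] X.carrier) (g : X.carrier →ₗ[Λ] M.carrier),
      IsSES Λ f g → ¬ SplitsSES Λ f g → F' ∈ F → X ∈ F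
  p3 : ∀ F' ∈ F, ∀ f : M.carrier →ₗ[Λ] F'.carrier, f = 0

/-- `T'` covers `T` in the lattice `tors Λ` of torsion classes ordered by containment. -/
def TorsCovers (T' T : Set (Mdl Λ)) : Prop :=
  IsTorsionClass Λ T' ∧ IsTorsionClass Λ T ∧ T ⊂ T' ∧
    ∀ Y : Set (Mdl Λ), IsTorsionClass Λ Y → T ⊂ Y → Y ⊆ T' → Y = T'

/-- `F'` covers `F` in the lattice `torf Λ` of torsion-free classes ordered by containment. -/
def TorfCovers (F' F : Set (Mdl Λ)) : Prop :=
  IsTorsionFreeClass Λ F' ∧ IsTorsionFreeClass Λ F ∧ F ⊂ F' ∧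
    ∀ Y : Set (Mdl Λ), IsTorsionFreeClass Λ Y → F ⊂ Y → Y ⊆ F' → Y = F'

/-- The join `⋁ A` of a family of torsion classes in `tors Λ`: the smallest torsion
class containing all members of `A`. -/
def TorsJoin (A : Set (Set (Mdl Λ))) : Set (Mdl Λ) :=
  ⋂₀ {T : Set (Mdl Λ) | IsTorsionClass Λ T ∧ ∀ S ∈ A, S ⊆ T}

/-- A completely join-irreducible element of `tors Λ`: a torsion class `T` such that
`T ∈ A` whenever `A` is a set of torsion classes with `⋁ A = T`. -/
def CompletelyJoinIrred (T : Set (Mdl Λ)) : Prop :=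
  IsTorsionClass Λ T ∧
    ∀ A : Set (Set (Mdl Λ)), (∀ S ∈ A, IsTorsionClass Λ S) → TorsJoin Λ A = T → T ∈ A

/-- The join representation `⋁ A` is irredundant in `tors Λ`:
every proper subset has strictly smaller join. -/
def TorsIrredundant (A : Set (Set (Mdl Λ))) : Prop :=
  ∀ B : Set (Set (Mdl Λ)), B ⊂ A → TorsJoin Λ B ⊂ TorsJoin Λ A

/-- `A` is the canonical join representation of its join in `tors Λ` (equivalently, a face
of the canonical join complex `Γ(tors Λ)`): `⋁ A` is irredundant, and `A ≪ B` for every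
irredundant join representation `⋁ B` of the same element. -/
def TorsCJR (A : Set (Set (Mdl Λ))) : Prop :=
  (∀ S ∈ A, IsTorsionClass Λ S) ∧ TorsIrredundant Λ A ∧
    ∀ B : Set (Set (Mdl Λ)), (∀ S ∈ B, IsTorsionClass Λ S) →
      TorsJoin Λ B = TorsJoin Λ A → TorsIrredundant Λ B → ∀ a ∈ A, ∃ b ∈ B, a ⊆ b

/-- `M` and `N` are hom-orthogonal: `Hom_Λ(M, N) = 0` and `Hom_Λ(N, M) = 0`. -/
def HomOrthogonal (M N : Mdl Λ) : Prop :=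
  (∀ f : M.carrier →ₗ[Λ] N.carrier, f = 0) ∧ ∀ f : N.carrier →ₗ[Λ] M.carrier, f = 0

/-!
Let `M` satisfy (P2) and (P3) for `T`. An extension of a module in `T` by `M` lies in `T` or splits,
and in the second case it maps onto `M`. Peeling off a filtration from the bottom, every module of
`Filt (T ∪ {M})` therefore lies in `T` or has `M` as a factor.

Suppose now that `Filt (T₁ ∪ {M₁}) = Filt (T₂ ∪ {M₂})` and that `f : M₁ → M₂` is nonzero. A module
`X ∈ T₂` outside `T₁` would map onto `M₁`, hence nontrivially to `M₂`, against (P3); so `T₂ ⊆ T₁`.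
If `M₂ ∈ T₁`, then `M₁ ∈ Filt (T₂ ∪ {M₂}) ⊆ T₁`, again against (P3). Otherwise `M₂` maps onto `M₁`,
and the argument for `T₂ ⊆ T₁` applied to this surjection gives `T₁ ⊆ T₂`, so `T₁ = T₂`.
-/

section

variable {Λ}

/-- An extension-closed class of modules: the part of the notion of a torsion class that controls
filtration closures, without factor modules and without finiteness. -/
structure IsExtClosed (T : Set (Mdl Λ)) : Prop where
  zero_mem : ∀ M : Mdl Λ, Subsingleton M.carrier → M ∈ T
  iso_closed : ∀ M ∈ T, ∀ N : Mdl Λ, MIso Λ M N → N ∈ T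
  ext_closed : ∀ A ∈ T, ∀ B ∈ T, ∀ M : Mdl Λ, ExtOf Λ M A B → M ∈ T

/-- An extending module for `T`: the notion of `IsMinExt` without the minimality condition (P1),
that is, with (P2) and (P3) only. -/
structure IsExtendingModule (T : Set (Mdl Λ)) (M : Mdl Λ) : Prop where
  nonsplit_ext_mem : ∀ (X N : Mdl Λ) (f : M.carrier →ₗ[Λ] X.carrier)
    (g : X.carrier →ₗ[Λ] N.carrier), IsSES Λ f g → ¬ SplitsSES Λ f g → N ∈ T → X ∈ T
  hom_eq_zero : ∀ N ∈ T, ∀ f : N.carrier →ₗ[Λ] M.carrier, f = 0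

theorem IsTorsionClass.isExtClosed {T : Set (Mdl Λ)} (hT : IsTorsionClass Λ T) : IsExtClosed T :=
  ⟨hT.zero_mem, hT.iso_closed, hT.ext_closed⟩

theorem IsMinExt.isExtendingModule {T : Set (Mdl Λ)} {M : Mdl Λ} (hM : IsMinExt Λ T M) :
    IsExtendingModule T M :=
  ⟨hM.p2, hM.p3⟩

theorem IsFactor.trans {L M N : Mdl Λ} (hLM : IsFactor Λ L M) (hMN : IsFactor Λ M N) :
    IsFactor Λ L N := by
  obtain ⟨p, hp⟩ := hLM
  obtain ⟨q, hq⟩ := hMN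
  exact ⟨q ∘ₗ p, hq.comp hp⟩

theorem SplitsSES.isFactor {A X B : Mdl Λ} {f : A.carrier →ₗ[Λ] X.carrier}
    {g : X.carrier →ₗ[Λ] B.carrier} (hsplit : SplitsSES Λ f g) (hfg : IsSES Λ f g) :
    IsFactor Λ X A := by
  obtain ⟨hf, -, hrange⟩ := hfg
  have hexact : Function.Exact f g := LinearMap.exact_iff.mpr hrange.symm
  obtain ⟨-, r, hr⟩ := (hexact.split_tfae'.out 0 1 :
    (Function.Injective f ∧ ∃ s, g ∘ₗ s = LinearMap.id) ↔ _).mp ⟨hf, hsplit⟩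
  exact ⟨r, fun a => ⟨f a, LinearMap.congr_fun hr a⟩⟩

namespace ExtOf

theorem zero_right (X : Mdl Λ) : ExtOf Λ X X (Mdl.of Λ PUnit) :=
  ⟨LinearMap.id, 0, Function.injective_id, fun _ => ⟨0, rfl⟩,
    LinearMap.range_id.trans LinearMap.ker_zero.symm⟩

theorem mIso_of_subsingleton {X A B : Mdl Λ} (h : ExtOf Λ X A B) (hA : Subsingleton A.carrier) :
    MIso Λ B X := by
  obtain ⟨f, g, -, hg, hfg⟩ := h
  have hker : LinearMap.ker g = ⊥ := by rw [← hfg, Subsingleton.elim f 0, LinearMap.range_zero]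
  exact ⟨(LinearEquiv.ofBijective g ⟨LinearMap.ker_eq_bot.mp hker, hg⟩).symm⟩

theorem of_mIso_left {X A A' B : Mdl Λ} (h : ExtOf Λ X A B) (e : MIso Λ A A') :
    ExtOf Λ X A' B := by
  obtain ⟨f, g, hf, hg, hfg⟩ := h
  obtain ⟨e⟩ := e
  exact ⟨f ∘ₗ e.symm, g, hf.comp e.symm.injective, hg, by
    rw [LinearMap.range_comp_of_range_eq_top f e.symm.range, hfg]⟩

/-- The third isomorphism theorem, with `Y = X / A'`. -/
theorem exists_quotient_left {X A B : Mdl Λ} (h : ExtOf Λ X A B) (A' : Submodule Λ A.carrier) :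
    ∃ Y : Mdl Λ, ExtOf Λ X (Mdl.of Λ A') Y ∧ ExtOf Λ Y (Mdl.of Λ (A.carrier ⧸ A')) B := by
  obtain ⟨f, g, hf, hg, hfg⟩ := h
  let K : Submodule Λ X.carrier := A'.map f
  have hK : K ≤ LinearMap.ker g := hfg ▸ LinearMap.map_le_range
  let i : (A.carrier ⧸ A') →ₗ[Λ] (X.carrier ⧸ K) := A'.mapQ K f (A'.le_comap_map f)
  let p : (X.carrier ⧸ K) →ₗ[Λ] B.carrier := K.liftQ g hK
  have hrange : LinearMap.range (f ∘ₗ A'.subtype) = LinearMap.ker K.mkQ := by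
    rw [LinearMap.range_comp, Submodule.range_subtype, Submodule.ker_mkQ]
  have hi : Function.Injective i := by
    rw [← LinearMap.ker_eq_bot, Submodule.ker_mapQ, Submodule.comap_map_eq_of_injective hf,
      Submodule.mkQ_map_self]
  have hp : Function.Surjective p := fun b =>
    (hg b).imp' K.mkQ fun x hx => (K.liftQ_apply g x).trans hx
  have hip : LinearMap.range i = LinearMap.ker p := by
    rw [Submodule.range_mapQ, Submodule.ker_liftQ, hfg]
  exact ⟨Mdl.of Λ (X.carrier ⧸ K),
    ⟨f ∘ₗ A'.subtype, K.mkQ, hf.comp A'.injective_subtype, K.mkQ_surjective, hrange⟩,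
    ⟨i, p, hi, hp, hip⟩⟩

end ExtOf

theorem subset_filtSet (S : Set (Mdl Λ)) : S ⊆ FiltSet Λ S := fun X hX =>
  Filt.step X ⊥ X hX
    (Filt.of_subsingleton _ (inferInstanceAs (Subsingleton (⊥ : Submodule Λ X.carrier))))
    ⟨Submodule.quotEquivOfEqBot ⊥ rfl⟩

theorem Filt.mem_of_extOf {S C : Set (Mdl Λ)} (hiso : ∀ B ∈ C, ∀ X, MIso Λ B X → X ∈ C)
    (hext : ∀ A ∈ S, ∀ B ∈ C, ∀ X, ExtOf Λ X A B → X ∈ C) {N : Mdl Λ} (hN : Filt Λ S N)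
    {B X : Mdl Λ} (hB : B ∈ C) (hX : ExtOf Λ X N B) : X ∈ C := by
  induction hN generalizing B with
  | of_subsingleton N hN => exact hiso B hB X (hX.mIso_of_subsingleton hN)
  | step N N' A hA _ e ih =>
    obtain ⟨Y, hXY, hYB⟩ := hX.exists_quotient_left N'
    have hY : Y ∈ C := hext A hA B hB Y (hYB.of_mIso_left e)
    exact ih hY hXY

theorem filtSet_subset {S C : Set (Mdl Λ)} (hzero : ∀ X : Mdl Λ, Subsingleton X.carrier → X ∈ C)
    (hiso : ∀ B ∈ C, ∀ X, MIso Λ B X → X ∈ C)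
    (hext : ∀ A ∈ S, ∀ B ∈ C, ∀ X, ExtOf Λ X A B → X ∈ C) : FiltSet Λ S ⊆ C := fun X hX =>
  hX.mem_of_extOf hiso hext (hzero _ (inferInstanceAs (Subsingleton PUnit))) (ExtOf.zero_right X)

theorem IsExtClosed.filtSet_subset {S T : Set (Mdl Λ)} (hT : IsExtClosed T) (hST : S ⊆ T) :
    FiltSet Λ S ⊆ T :=
  _root_.filtSet_subset hT.zero_mem hT.iso_closed fun A hA => hT.ext_closed A (hST hA)

namespace IsExtendingModule

variable {T T' : Set (Mdl Λ)} {M M' : Mdl Λ}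

theorem mem_or_isFactor_of_extOf (hM : IsExtendingModule T M) (hT : IsExtClosed T) {A B X : Mdl Λ}
    (hA : A ∈ insert M T) (hB : B ∈ T ∨ IsFactor Λ B M) (hX : ExtOf Λ X A B) :
    X ∈ T ∨ IsFactor Λ X M := by
  obtain ⟨f, g, hfg⟩ := hX
  rcases hB with hBT | hBM
  · rcases hA with rfl | hAT
    · by_cases hsplit : SplitsSES Λ f g
      · exact Or.inr (hsplit.isFactor hfg)
      · exact Or.inl (hM.nonsplit_ext_mem X B f g hfg hsplit hBT)
    · exact Or.inl (hT.ext_closed A hAT B hBT X ⟨f, g, hfg⟩)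
  · have hXB : IsFactor Λ X B := ⟨g, hfg.2.1⟩
    exact Or.inr (hXB.trans hBM)

theorem mem_or_isFactor_of_mem_filtSet (hM : IsExtendingModule T M) (hT : IsExtClosed T)
    {X : Mdl Λ} (hX : X ∈ FiltSet Λ (insert M T)) : X ∈ T ∨ IsFactor Λ X M := by
  refine filtSet_subset (C := {X | X ∈ T ∨ IsFactor Λ X M}) (fun Y hY => Or.inl (hT.zero_mem Y hY))
    ?_ (fun A hA B hB Y => hM.mem_or_isFactor_of_extOf hT hA hB) hX
  rintro B hB Y ⟨e⟩
  have hYB : IsFactor Λ Y B := ⟨e.symm, e.symm.surjective⟩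
  exact hB.imp (fun hBT => hT.iso_closed B hBT Y ⟨e⟩) hYB.trans

theorem subset_of_hom_ne_zero (hM : IsExtendingModule T M) (hM' : IsExtendingModule T' M')
    (hT' : IsExtClosed T') (hsub : T ⊆ FiltSet Λ (insert M' T'))
    {f : M'.carrier →ₗ[Λ] M.carrier} (hf : f ≠ 0) : T ⊆ T' := by
  intro X hX
  refine (hM'.mem_or_isFactor_of_mem_filtSet hT' (hsub hX)).resolve_right ?_
  rintro ⟨p, hp⟩
  have hfp : f ∘ₗ p = 0 := hM.hom_eq_zero X hX (f ∘ₗ p)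
  exact hf ((LinearMap.cancel_right hp).mp (hfp.trans (LinearMap.zero_comp p).symm))

theorem hom_eq_zero_of_filtSet_eq (hM : IsExtendingModule T M) (hM' : IsExtendingModule T' M')
    (hT : IsExtClosed T) (hT' : IsExtClosed T') (hne : T ≠ T')
    (heq : FiltSet Λ (insert M T) = FiltSet Λ (insert M' T')) (f : M.carrier →ₗ[Λ] M'.carrier) :
    f = 0 := by
  obtain ⟨hM_mem, hT_sub⟩ := Set.insert_subset_iff.mp (heq ▸ subset_filtSet (insert M T))
  obtain ⟨hM'_mem, hT'_sub⟩ := Set.insert_subset_iff.mp (heq ▸ subset_filtSet (insert M' T'))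
  by_contra hf
  have hid : (LinearMap.id : M.carrier →ₗ[Λ] M.carrier) ≠ 0 := fun h =>
    hf (by rw [← f.comp_id, h, LinearMap.comp_zero])
  have hT'T : T' ⊆ T := hM'.subset_of_hom_ne_zero hM hT hT'_sub hf
  rcases hM.mem_or_isFactor_of_mem_filtSet hT hM'_mem with hM'T | ⟨g, hg⟩
  · have hMT : M ∈ T := hT.filtSet_subset (Set.insert_subset hM'T hT'T) hM_mem
    exact hid (hM.hom_eq_zero M hMT LinearMap.id)
  · have hg_ne : g ≠ 0 := fun h => hid <| (LinearMap.cancel_right hg).mp (by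
      rw [h, LinearMap.comp_zero, LinearMap.comp_zero])
    exact hne ((hM.subset_of_hom_ne_zero hM' hT' hT_sub hg_ne).antisymm hT'T)

end IsExtendingModule

theorem statement11_general {T1 T2 : Set (Mdl Λ)} (hT1 : IsExtClosed T1) (hT2 : IsExtClosed T2)
    (hne : T1 ≠ T2) {M1 M2 : Mdl Λ} (hM1 : IsExtendingModule T1 M1)
    (hM2 : IsExtendingModule T2 M2)
    (heq : FiltSet Λ (insert M1 T1) = FiltSet Λ (insert M2 T2)) : HomOrthogonal Λ M1 M2 :=
  ⟨hM1.hom_eq_zero_of_filtSet_eq hM2 hT1 hT2 hne heq,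
    hM2.hom_eq_zero_of_filtSet_eq hM1 hT2 hT1 hne.symm heq.symm⟩

end

/-- Let `T₁ ≠ T₂` be torsion classes and `Mᵢ` a minimal extending
module for `Tᵢ` (`i = 1, 2`).  If `Filt(T₁ ∪ {M₁}) = Filt(T₂ ∪ {M₂})`, then
`Hom_Λ(M₁, M₂) = 0` and `Hom_Λ(M₂, M₁) = 0`. -/
theorem statement11 (k : Type) [Field k] (Λ : Type) [Ring Λ] [Algebra k Λ]
    [FiniteDimensional k Λ] (T1 T2 : Set (Mdl Λ))
    (hT1 : IsTorsionClass Λ T1) (hT2 : IsTorsionClass Λ T2) (hne : T1 ≠ T2)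
    (M1 M2 : Mdl Λ) (hM1 : IsMinExt Λ T1 M1) (hM2 : IsMinExt Λ T2 M2)
    (heq : FiltSet Λ (insert M1 T1) = FiltSet Λ (insert M2 T2)) :
    (∀ f : M1.carrier →ₗ[Λ] M2.carrier, f = 0) ∧
      (∀ f : M2.carrier →ₗ[Λ] M1.carrier, f = 0) :=
  statement11_general hT1.isExtClosed hT2.isExtClosed hne hM1.isExtendingModule
    hM2.isExtendingModule heq
end

section
/- A torsion class T in tors Λ is completely join-irreducible if and only if there exists a brick M such that T = Filt(Gen(M)); in this case the brick M is unique up to isomorphism. -/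
variable (Λ : Type) [Ring Λ]

/-!
For a brick `M`, every nonzero map to `M` from a module in `Filt(Gen(M))` is surjective, so a
torsion class strictly contained in `Filt(Gen(M))` has no nonzero maps to `M`. Hence all of them lie
in the torsion class `⊥M`, which does not contain `M`, and `Filt(Gen(M))` is completely
join-irreducible. Conversely, let `T` be completely join-irreducible, let `U` be the join of the
torsion classes strictly contained in `T`, and choose a factor `M ∉ U` of a module in `T` all of
whose proper factors lie in `U`. If a nonzero endomorphism of `M` were not injective, its image and
its cokernel would be proper factors of `M`, so `M` would be an extension of modules in `U`. Thus
`M` is a brick, and `Filt(Gen(M)) ⊆ T` is not contained in `U`, so it equals `T`.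
-/

section

variable {Λ}

/-- The class `S` is closed under factor modules; in particular it is closed under
isomorphisms. -/
def FactorClosed (S : Set (Mdl Λ)) : Prop :=
  ∀ M ∈ S, ∀ N : Mdl Λ, IsFactor Λ M N → N ∈ S

/-- The class `⊥X` of finitely generated modules that have no nonzero map to `X`. -/
def LeftPerp (X : Mdl Λ) : Set (Mdl Λ) :=
  {N | Module.Finite Λ N ∧ ∀ f : N →ₗ[Λ] X, f = 0}

theorem isTorsionClass_of_submodule_quotient {T : Set (Mdl Λ)}
    (fin : ∀ M ∈ T, Module.Finite Λ M)
    (zero_mem : ∀ M : Mdl Λ, Subsingleton M → M ∈ T)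
    (factor_closed : FactorClosed T)
    (mem_of_quotient : ∀ (M : Mdl Λ) (N : Submodule Λ M),
      Mdl.of Λ N ∈ T → Mdl.of Λ (M ⧸ N) ∈ T → M ∈ T) :
    IsTorsionClass Λ T where
  fin := fin
  zero_mem := zero_mem
  iso_closed M hM N := fun ⟨e⟩ ↦ factor_closed M hM N ⟨e, e.surjective⟩
  factor_closed := factor_closed
  ext_closed A hA B hB M := by
    rintro ⟨f, g, -, hg, hfg⟩
    let e := (LinearEquiv.ofEq _ _ hfg).toLinearMap ∘ₗ f.rangeRestrict
    have he : Function.Surjective e :=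
      (LinearEquiv.ofEq _ _ hfg).surjective.comp f.surjective_rangeRestrict
    let q := (g.quotKerEquivOfSurjective hg).symm
    exact mem_of_quotient M (LinearMap.ker g) (factor_closed A hA _ ⟨e, he⟩)
      (factor_closed B hB _ ⟨q.toLinearMap, q.surjective⟩)

namespace IsTorsionClass

variable {T : Set (Mdl Λ)} (hT : IsTorsionClass Λ T)

include hT

theorem mem_of_submodule_quotient {M : Mdl Λ} (N : Submodule Λ M)
    (hN : Mdl.of Λ N ∈ T) (hMN : Mdl.of Λ (M ⧸ N) ∈ T) : M ∈ T :=
  hT.ext_closed _ hN _ hMN M ⟨N.subtype, N.mkQ, N.injective_subtype, N.mkQ_surjective,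
    N.range_subtype.trans N.ker_mkQ.symm⟩

theorem prod_mem {M N : Mdl Λ} (hM : M ∈ T) (hN : N ∈ T) : Mdl.of Λ (M × N) ∈ T :=
  hT.ext_closed M hM N hN _ ⟨LinearMap.inl Λ M N, LinearMap.snd Λ M N, LinearMap.inl_injective,
    LinearMap.snd_surjective, LinearMap.range_inl Λ M N⟩

theorem pi_fin_mem {M : Mdl Λ} (hM : M ∈ T) (n : ℕ) : Mdl.of Λ (Fin n → M) ∈ T := by
  induction n with
  | zero => exact hT.zero_mem _ (inferInstanceAs (Subsingleton (Fin 0 → M)))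
  | succ n ih =>
    exact hT.iso_closed _ (hT.prod_mem hM ih) _ ⟨Fin.consLinearEquiv Λ fun _ ↦ M⟩

theorem genSet_subset {M : Mdl Λ} (hM : M ∈ T) : GenSet Λ M ⊆ T :=
  fun N ⟨n, hN⟩ ↦ hT.factor_closed _ (hT.pi_fin_mem hM n) N hN

theorem filtSet_subset {S : Set (Mdl Λ)} (hST : S ⊆ T) : FiltSet Λ S ⊆ T := by
  intro X hX
  induction hX with
  | of_subsingleton X h => exact hT.zero_mem X h
  | step X N Z hZ _ e ih =>
    exact hT.mem_of_submodule_quotient N ih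
      (hT.iso_closed Z (hST hZ) _ ⟨e.some.symm⟩)

theorem filtSet_genSet_subset {M : Mdl Λ} (hM : M ∈ T) : FiltSet Λ (GenSet Λ M) ⊆ T :=
  hT.filtSet_subset (hT.genSet_subset hM)

end IsTorsionClass

namespace Filt

variable {S : Set (Mdl Λ)}

theorem of_ker {X Z : Mdl Λ} (g : X →ₗ[Λ] Z) (hg : Function.Surjective g) (hZ : Z ∈ S)
    (hker : Filt Λ S (Mdl.of Λ (LinearMap.ker g))) : Filt Λ S X :=
  step X (LinearMap.ker g) Z hZ hker ⟨g.quotKerEquivOfSurjective hg⟩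

theorem of_mem {M : Mdl Λ} (hM : M ∈ S) : Filt Λ S M :=
  step M ⊥ M hM (of_subsingleton _ (inferInstanceAs (Subsingleton (⊥ : Submodule Λ M))))
    ⟨Submodule.quotEquivOfEqBot ⊥ rfl⟩

theorem finite (hS : ∀ M ∈ S, Module.Finite Λ M) {X : Mdl Λ} (hX : Filt Λ S X) :
    Module.Finite Λ X := by
  induction hX with
  | of_subsingleton X h => infer_instance
  | step X N Z hZ _ e ih =>
    have := hS Z hZ
    have : Module.Finite Λ (X ⧸ N) := Module.Finite.equiv e.some.symm
    have : Module.Finite Λ N := ih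
    exact Module.Finite.of_submodule_quotient N

theorem of_surjective (hS : FactorClosed S) {X Y : Mdl Λ} (hX : Filt Λ S X)
    (f : X →ₗ[Λ] Y) (hf : Function.Surjective f) : Filt Λ S Y := by
  induction hX generalizing Y with
  | of_subsingleton X h => exact of_subsingleton Y hf.subsingleton
  | step X N Z hZ _ e ih =>
    let q : (X ⧸ N) →ₗ[Λ] Y ⧸ N.map f := N.mapQ (N.map f) f (N.le_comap_map f)
    have hq : Function.Surjective q := by
      refine Function.Surjective.of_comp (g := N.mkQ) ?_
      exact (N.map f).mkQ_surjective.comp hf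
    refine step Y (N.map f) (Mdl.of Λ (Y ⧸ N.map f)) ?_ ?_ ⟨LinearEquiv.refl _ _⟩
    · exact hS Z hZ _ ⟨q ∘ₗ e.some.symm, hq.comp e.some.symm.surjective⟩
    · exact ih (Y := Mdl.of Λ (N.map f)) (f.submoduleMap N) (f.submoduleMap_surjective N)

/-- Pulling a filtration of `B` back along `g` keeps its subquotients, and its bottom term becomes
`ker g`, which is a factor of `A`. -/
theorem of_exact (hS : FactorClosed S) {A B X : Mdl Λ} (hA : Filt Λ S A) (hB : Filt Λ S B)
    (f : A →ₗ[Λ] X) (g : X →ₗ[Λ] B) (hfg : Function.Exact f g) (hg : Function.Surjective g) :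
    Filt Λ S X := by
  induction hB generalizing X with
  | of_subsingleton B h =>
    exact hA.of_surjective hS f fun x ↦ (hfg x).1 (Subsingleton.elim _ _)
  | step B N Z hZ _ e ih =>
    let p : X →ₗ[Λ] Z := e.some.toLinearMap ∘ₗ N.mkQ ∘ₗ g
    have hp : Function.Surjective p := e.some.surjective.comp (N.mkQ_surjective.comp hg)
    have mem_ker_p {x : X} : x ∈ LinearMap.ker p ↔ g x ∈ N := by simp [p]
    let f' : A →ₗ[Λ] LinearMap.ker p :=
      f.codRestrict _ fun a ↦ mem_ker_p.2 (by simp [hfg.apply_apply_eq_zero])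
    let g' : LinearMap.ker p →ₗ[Λ] N := g.restrict fun x hx ↦ mem_ker_p.1 hx
    have hg' : Function.Surjective g' := by
      rintro ⟨b, hb⟩
      obtain ⟨x, rfl⟩ := hg b
      exact ⟨⟨x, mem_ker_p.2 hb⟩, rfl⟩
    have hfg' : Function.Exact f' g' := fun x ↦ by
      simpa [f', g', Subtype.ext_iff] using hfg x
    exact of_ker p hp hZ (ih (X := Mdl.of Λ (LinearMap.ker p)) f' g' hfg' hg')

end Filt

theorem isTorsionClass_filtSet {S : Set (Mdl Λ)} (hfin : ∀ M ∈ S, Module.Finite Λ M)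
    (hS : FactorClosed S) : IsTorsionClass Λ (FiltSet Λ S) :=
  isTorsionClass_of_submodule_quotient
    (fun _ hX ↦ hX.finite hfin)
    (fun X h ↦ .of_subsingleton X h)
    (fun _ hX _ ⟨f, hf⟩ ↦ hX.of_surjective hS f hf)
    (fun _ N hN hXN ↦ hN.of_exact hS hXN N.subtype N.mkQ (LinearMap.exact_subtype_mkQ N)
      N.mkQ_surjective)

theorem factorClosed_genSet (M : Mdl Λ) : FactorClosed (GenSet Λ M) :=
  fun _ ⟨n, p, hp⟩ _ ⟨f, hf⟩ ↦ ⟨n, f ∘ₗ p, hf.comp hp⟩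

theorem self_mem_genSet (M : Mdl Λ) : M ∈ GenSet Λ M :=
  ⟨1, LinearMap.proj 0, fun x ↦ ⟨fun _ ↦ x, rfl⟩⟩

theorem self_mem_filtSet_genSet (M : Mdl Λ) : M ∈ FiltSet Λ (GenSet Λ M) :=
  Filt.of_mem (self_mem_genSet M)

theorem isTorsionClass_filtSet_genSet (M : Mdl Λ) [Module.Finite Λ M] :
    IsTorsionClass Λ (FiltSet Λ (GenSet Λ M)) :=
  isTorsionClass_filtSet (fun _ ⟨_, p, hp⟩ ↦ .of_surjective p hp) (factorClosed_genSet M)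

theorem isTorsionClass_leftPerp (X : Mdl Λ) : IsTorsionClass Λ (LeftPerp X) := by
  refine isTorsionClass_of_submodule_quotient (fun _ hM ↦ hM.1)
    (fun M _ ↦ ⟨inferInstance, fun f ↦ Subsingleton.elim _ _⟩) ?factor_closed ?mem_of_quotient
  case factor_closed =>
    rintro M ⟨_, hM⟩ N ⟨p, hp⟩
    exact ⟨.of_surjective p hp, fun f ↦ (LinearMap.cancel_right hp).1 (hM (f ∘ₗ p))⟩
  case mem_of_quotient =>
    rintro M N ⟨hNfin, hN⟩ ⟨hQfin, hQ⟩
    have : Module.Finite Λ N := hNfin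
    have : Module.Finite Λ (M ⧸ N) := hQfin
    refine ⟨.of_submodule_quotient N, fun f ↦ ?_⟩
    have hf : N ≤ LinearMap.ker f := fun x hx ↦ LinearMap.congr_fun (hN (f ∘ₗ N.subtype)) ⟨x, hx⟩
    rw [← N.liftQ_mkQ f hf, show N.liftQ f hf = 0 from hQ _, LinearMap.zero_comp]

theorem self_notMem_leftPerp (M : Mdl Λ) [Nontrivial M] : M ∉ LeftPerp M := by
  rintro ⟨-, hM⟩
  obtain ⟨x, hx⟩ := exists_ne (0 : M)
  exact hx (LinearMap.congr_fun (hM LinearMap.id) x)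

theorem exists_linearMap_ne_zero_of_mem_filtSet_genSet {M X : Mdl Λ} [Module.Finite Λ M]
    [Nontrivial X] (hX : X ∈ FiltSet Λ (GenSet Λ M)) : ∃ f : M →ₗ[Λ] X, f ≠ 0 := by
  by_contra! h
  exact self_notMem_leftPerp X ((isTorsionClass_leftPerp X).filtSet_genSet_subset ⟨‹_›, h⟩ hX)

theorem isTorsionClass_torsJoin {A : Set (Set (Mdl Λ))} {T : Set (Mdl Λ)}
    (hT : IsTorsionClass Λ T) (hA : ∀ S ∈ A, S ⊆ T) : IsTorsionClass Λ (TorsJoin Λ A) where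
  fin X hX := hT.fin X (hX T ⟨hT, hA⟩)
  zero_mem X h _ hU := hU.1.zero_mem X h
  iso_closed X hX Y e U hU := hU.1.iso_closed X (hX U hU) Y e
  factor_closed X hX Y f U hU := hU.1.factor_closed X (hX U hU) Y f
  ext_closed X hX Y hY Z e U hU := hU.1.ext_closed X (hX U hU) Y (hY U hU) Z e

theorem subset_torsJoin {A : Set (Set (Mdl Λ))} {S : Set (Mdl Λ)} (hS : S ∈ A) :
    S ⊆ TorsJoin Λ A :=
  Set.subset_sInter fun _ hU ↦ hU.2 S hS

theorem torsJoin_subset {A : Set (Set (Mdl Λ))} {T : Set (Mdl Λ)}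
    (hT : IsTorsionClass Λ T) (hA : ∀ S ∈ A, S ⊆ T) : TorsJoin Λ A ⊆ T :=
  Set.sInter_subset_of_mem ⟨hT, hA⟩

theorem completelyJoinIrred_iff_exists {T : Set (Mdl Λ)} (hT : IsTorsionClass Λ T) :
    CompletelyJoinIrred Λ T ↔
      ∃ U, IsTorsionClass Λ U ∧ ¬ T ⊆ U ∧ ∀ S, IsTorsionClass Λ S → S ⊂ T → S ⊆ U := by
  constructor
  · rintro ⟨-, hirred⟩
    let A := {S : Set (Mdl Λ) | IsTorsionClass Λ S ∧ S ⊂ T}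
    have hA : ∀ S ∈ A, S ⊆ T := fun _ hS ↦ hS.2.subset
    refine ⟨TorsJoin Λ A, isTorsionClass_torsJoin hT hA, fun hTA ↦ ?_,
      fun _ hS hST ↦ subset_torsJoin ⟨hS, hST⟩⟩
    have hTmem : T ∈ A := hirred A (fun _ hS ↦ hS.1) ((torsJoin_subset hT hA).antisymm hTA)
    exact hTmem.2.ne rfl
  · rintro ⟨U, hU, hTU, hmax⟩
    refine ⟨hT, fun A hA hAT ↦ ?_⟩
    by_contra hTA
    have hlt : ∀ S ∈ A, S ⊂ T := fun S hS ↦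
      (hAT ▸ subset_torsJoin hS).ssubset_of_ne fun h ↦ hTA (h ▸ hS)
    exact hTU (hAT ▸ torsJoin_subset hU fun S hS ↦ hmax S (hA S hS) (hlt S hS))

theorem exists_isFactor_minimal_notMem {U : Set (Mdl Λ)} {X : Mdl Λ} [IsNoetherian Λ X]
    (hX : X ∉ U) :
    ∃ M, IsFactor Λ X M ∧ M ∉ U ∧ ∀ N, IsProperFactor Λ M N → N ∈ U := by
  let kernels : Set (Submodule Λ X) :=
    {K | ∃ M ∉ U, ∃ p : X →ₗ[Λ] M, Function.Surjective p ∧ LinearMap.ker p = K}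
  obtain ⟨_, ⟨M, hM, p, hp, rfl⟩, hmax⟩ := wellFounded_gt.has_min kernels
    ⟨_, X, hX, LinearMap.id, Function.surjective_id, rfl⟩
  refine ⟨M, ⟨p, hp⟩, hM, fun N ⟨q, hq, hq_inj⟩ ↦ ?_⟩
  by_contra hN
  have hlt : LinearMap.ker p < LinearMap.ker (q ∘ₗ p) := by
    rw [LinearMap.ker_comp]
    exact Submodule.comap_strictMono_of_surjective hp
      (bot_lt_iff_ne_bot.2 fun h ↦ hq_inj (LinearMap.ker_eq_bot.1 h))
  exact hmax _ ⟨N, hN, q ∘ₗ p, hq.comp hp, rfl⟩ hlt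

theorem isBrick_of_minimal_notMem {U : Set (Mdl Λ)} (hU : IsTorsionClass Λ U) {M : Mdl Λ}
    [Module.Finite Λ M] [IsArtinian Λ M] (hM : M ∉ U)
    (hmin : ∀ N, IsProperFactor Λ M N → N ∈ U) : IsBrick Λ M := by
  refine ⟨‹_›, ?_, fun f hf ↦ ?_⟩
  · by_contra h
    exact hM (hU.zero_mem M (not_nontrivial_iff_subsingleton.1 h))
  have hcoker : Mdl.of Λ (M ⧸ LinearMap.range f) ∈ U := by
    refine hmin _ ⟨(LinearMap.range f).mkQ, Submodule.mkQ_surjective _, fun hinj ↦ hf ?_⟩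
    rwa [← LinearMap.range_eq_bot, ← (LinearMap.range f).ker_mkQ, LinearMap.ker_eq_bot]
  have hinj : Function.Injective f := by
    by_contra hinj
    have hrange : Mdl.of Λ (LinearMap.range f) ∈ U :=
      hmin _ ⟨f.rangeRestrict, f.surjective_rangeRestrict,
        fun h ↦ hinj (f.injective_rangeRestrict_iff.1 h)⟩
    exact hM (hU.mem_of_submodule_quotient _ hrange hcoker)
  exact ⟨hinj, IsArtinian.surjective_of_injective_endomorphism f hinj⟩

theorem exists_isBrick_mem_notMem [IsArtinianRing Λ] {T U : Set (Mdl Λ)}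
    (hT : IsTorsionClass Λ T) (hU : IsTorsionClass Λ U) (hTU : ¬ T ⊆ U) :
    ∃ M, IsBrick Λ M ∧ M ∈ T ∧ M ∉ U := by
  obtain ⟨X, hXT, hXU⟩ := Set.not_subset.1 hTU
  have := hT.fin X hXT
  obtain ⟨M, hXM, hMU, hmin⟩ := exists_isFactor_minimal_notMem hXU
  have hMT := hT.factor_closed X hXT M hXM
  have := hT.fin M hMT
  exact ⟨M, isBrick_of_minimal_notMem hU hMU hmin, hMT, hMU⟩

namespace IsBrick

variable {M : Mdl Λ} (hM : IsBrick Λ M)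

include hM

theorem surjective_of_mem_filtSet_genSet {X : Mdl Λ} (hX : X ∈ FiltSet Λ (GenSet Λ M))
    {f : X →ₗ[Λ] M} (hf : f ≠ 0) : Function.Surjective f := by
  obtain ⟨_, -, hbij⟩ := hM
  have hrange : Mdl.of Λ (LinearMap.range f) ∈ FiltSet Λ (GenSet Λ M) :=
    (isTorsionClass_filtSet_genSet M).factor_closed X hX _
      ⟨f.rangeRestrict, f.surjective_rangeRestrict⟩
  have : Nontrivial (Mdl.of Λ (LinearMap.range f)) :=
    Submodule.nontrivial_iff_ne_bot.2 (mt LinearMap.range_eq_bot.1 hf)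
  obtain ⟨g, hg⟩ := exists_linearMap_ne_zero_of_mem_filtSet_genSet hrange
  let i := (LinearMap.range f).subtype
  have hig : i ∘ₗ g ≠ 0 := fun h ↦
    hg ((LinearMap.cancel_left (LinearMap.range f).injective_subtype).1
      (h.trans (LinearMap.comp_zero i).symm))
  have hi : Function.Surjective i := .of_comp (hbij _ hig).2
  exact LinearMap.range_eq_top.1 ((LinearMap.range f).range_subtype ▸ LinearMap.range_eq_top.2 hi)

theorem subset_leftPerp_of_ssubset {S : Set (Mdl Λ)} (hS : IsTorsionClass Λ S)
    (hSM : S ⊂ FiltSet Λ (GenSet Λ M)) : S ⊆ LeftPerp M := by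
  refine fun X hX ↦ ⟨hS.fin X hX, fun f ↦ ?_⟩
  by_contra hf
  have hMS : M ∈ S := hS.factor_closed X hX M
    ⟨f, hM.surjective_of_mem_filtSet_genSet (hSM.subset hX) hf⟩
  exact hSM.not_subset (hS.filtSet_genSet_subset hMS)

theorem completelyJoinIrred_filtSet_genSet :
    CompletelyJoinIrred Λ (FiltSet Λ (GenSet Λ M)) := by
  have ⟨_, _, _⟩ := hM
  refine (completelyJoinIrred_iff_exists (isTorsionClass_filtSet_genSet M)).2
    ⟨LeftPerp M, isTorsionClass_leftPerp M, fun h ↦ ?_, fun _ ↦ hM.subset_leftPerp_of_ssubset⟩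
  exact self_notMem_leftPerp M (h (self_mem_filtSet_genSet M))

theorem mIso_of_filtSet_genSet_eq {M' : Mdl Λ} (hM' : IsBrick Λ M')
    (h : FiltSet Λ (GenSet Λ M) = FiltSet Λ (GenSet Λ M')) : MIso Λ M M' := by
  have ⟨_, _, hbij⟩ := hM
  have ⟨_, _, _⟩ := hM'
  have hmem : M ∈ FiltSet Λ (GenSet Λ M') := h ▸ self_mem_filtSet_genSet M
  have hmem' : M' ∈ FiltSet Λ (GenSet Λ M) := h ▸ self_mem_filtSet_genSet M'
  obtain ⟨f, hf⟩ := exists_linearMap_ne_zero_of_mem_filtSet_genSet hmem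
  obtain ⟨g, hg⟩ := exists_linearMap_ne_zero_of_mem_filtSet_genSet hmem'
  have hg_surj : Function.Surjective g := hM'.surjective_of_mem_filtSet_genSet hmem hg
  have hfg : f ∘ₗ g ≠ 0 := fun h0 ↦
    hf ((LinearMap.cancel_right hg_surj).1 (h0.trans (LinearMap.zero_comp g).symm))
  have hg_inj : Function.Injective g := .of_comp (hbij _ hfg).1
  exact ⟨.ofBijective g ⟨hg_inj, hg_surj⟩⟩

end IsBrick

theorem statement15_general [IsArtinianRing Λ] (T : Set (Mdl Λ)) :
    (CompletelyJoinIrred Λ T ↔ ∃ M : Mdl Λ, IsBrick Λ M ∧ T = FiltSet Λ (GenSet Λ M)) ∧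
    (∀ M M' : Mdl Λ, IsBrick Λ M → IsBrick Λ M' → T = FiltSet Λ (GenSet Λ M) →
      T = FiltSet Λ (GenSet Λ M') → MIso Λ M M') := by
  refine ⟨⟨fun hT ↦ ?_, ?_⟩, ?_⟩
  · obtain ⟨U, hU, hTU, hmax⟩ := (completelyJoinIrred_iff_exists hT.1).1 hT
    obtain ⟨M, hM, hMT, hMU⟩ := exists_isBrick_mem_notMem hT.1 hU hTU
    have := hM.1
    refine ⟨M, hM, ?_⟩
    by_contra hne
    have hlt := (hT.1.filtSet_genSet_subset hMT).ssubset_of_ne (Ne.symm hne)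
    exact hMU (hmax _ (isTorsionClass_filtSet_genSet M) hlt (self_mem_filtSet_genSet M))
  · rintro ⟨M, hM, rfl⟩
    exact hM.completelyJoinIrred_filtSet_genSet
  · rintro M M' hM hM' rfl h
    exact hM.mIso_of_filtSet_genSet_eq hM' h

end

/-- A torsion class `T` in `tors Λ` is completely join-irreducible if
and only if `T = Filt(Gen(M))` for some brick `M`; in this case `M` is unique up to
isomorphism. -/
theorem statement15 (k : Type) [Field k] (Λ : Type) [Ring Λ] [Algebra k Λ]
    [FiniteDimensional k Λ] (T : Set (Mdl Λ)) (hT : IsTorsionClass Λ T) :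
    (CompletelyJoinIrred Λ T ↔ ∃ M : Mdl Λ, IsBrick Λ M ∧ T = FiltSet Λ (GenSet Λ M)) ∧
    (∀ M M' : Mdl Λ, IsBrick Λ M → IsBrick Λ M' → T = FiltSet Λ (GenSet Λ M) →
      T = FiltSet Λ (GenSet Λ M') → MIso Λ M M') :=
  have : IsArtinianRing Λ := .of_finite k Λ
  statement15_general T
end
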